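/- Let X be a KU-algebra, d a derivation of X, and μ, β fuzzy sets on X such that the Cartesian product μ × β, defined by (μ × β)(x, y) = min(μ(x), β(y)), is a fuzzy left derivations KU-ideal of the product KU-algebra X × X with respect to the self map D(x, y) = (d(x), d(y)). Then either μ(d(x)) ≤ μ(d(0)) for all x ∈ X, or β(d(x)) ≤ β(d(0)) for all x ∈ X. -/

import Mathlib

/-- A KU-algebra: a set `X` with a binary operation `⋆` and a constant `𝟎` satisfying
(KU1) `(x⋆y)⋆((y⋆z)⋆(x⋆z)) = 𝟎`, (KU2) `x⋆𝟎 = 𝟎`, (KU3) `𝟎⋆x = x`,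
(KU4) `x⋆y = 𝟎` and `y⋆x = 𝟎` imply `x = y`. -/
class KUAlgebra (X : Type*) where
  star : X → X → X
  zero : X
  ku1 : ∀ x y z : X, star (star x y) (star (star y z) (star x z)) = zero
  ku2 : ∀ x : X, star x zero = zero
  ku3 : ∀ x : X, star zero x = x
  ku4 : ∀ x y : X, star x y = zero → star y x = zero → x = y

infixl:70 " ⋆ " => KUAlgebra.star
notation "𝟎" => KUAlgebra.zero

/-- The order `x ≤ y ↔ y ⋆ x = 𝟎` on a KU-algebra. -/
def KUle {X : Type*} [KUAlgebra X] (x y : X) : Prop := y ⋆ x = 𝟎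

/-- `x ∧ y := (x ⋆ y) ⋆ y` in a KU-algebra. -/
def KUwedge {X : Type*} [KUAlgebra X] (x y : X) : X := (x ⋆ y) ⋆ y

/-- An (ℓ,r)-derivation: `d(x⋆y) = (d(x)⋆y) ∧ (x⋆d(y))`. -/
def IsLRDeriv {X : Type*} [KUAlgebra X] (d : X → X) : Prop :=
  ∀ x y : X, d (x ⋆ y) = KUwedge (d x ⋆ y) (x ⋆ d y)

/-- An (r,ℓ)-derivation: `d(x⋆y) = (x⋆d(y)) ∧ (d(x)⋆y)`. -/
def IsRLDeriv {X : Type*} [KUAlgebra X] (d : X → X) : Prop :=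
  ∀ x y : X, d (x ⋆ y) = KUwedge (x ⋆ d y) (d x ⋆ y)

/-- A derivation is both an (ℓ,r)- and an (r,ℓ)-derivation. -/
def IsDeriv {X : Type*} [KUAlgebra X] (d : X → X) : Prop := IsLRDeriv d ∧ IsRLDeriv d

/-- A fuzzy left derivations KU-ideal of `X` with respect to a self map `d`:
a fuzzy set `μ : X → [0,1]` with `μ 𝟎 ≥ μ x` and
`μ (d (x ⋆ z)) ≥ min (μ (d x ⋆ (y ⋆ z))) (μ (d y))`. -/
def IsFuzzyLeftDerivKUIdeal {X : Type*} [KUAlgebra X] (d : X → X) (μ : X → ℝ) : Prop :=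
  (∀ x : X, μ x ∈ Set.Icc (0 : ℝ) 1) ∧
  (∀ x : X, μ 𝟎 ≥ μ x) ∧
  (∀ x y z : X, μ (d (x ⋆ z)) ≥ min (μ (d x ⋆ (y ⋆ z))) (μ (d y)))

/-- A fuzzy right derivations KU-ideal of `X` with respect to a self map `d`:
a fuzzy set `μ : X → [0,1]` with `μ 𝟎 ≥ μ x` and
`μ (d (x ⋆ z)) ≥ min (μ (x ⋆ d (y ⋆ z))) (μ (d y))`. -/
def IsFuzzyRightDerivKUIdeal {X : Type*} [KUAlgebra X] (d : X → X) (μ : X → ℝ) : Prop :=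
  (∀ x : X, μ x ∈ Set.Icc (0 : ℝ) 1) ∧
  (∀ x : X, μ 𝟎 ≥ μ x) ∧
  (∀ x y z : X, μ (d (x ⋆ z)) ≥ min (μ (x ⋆ d (y ⋆ z))) (μ (d y)))

/-- The product of two KU-algebras, with componentwise operation and constant `(𝟎, 𝟎)`. -/
instance instKUProd {X Y : Type*} [KUAlgebra X] [KUAlgebra Y] : KUAlgebra (X × Y) where
  star p q := (p.1 ⋆ q.1, p.2 ⋆ q.2)
  zero := (𝟎, 𝟎)
  ku1 p q r := by
    simp only [Prod.mk.injEq]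
    exact ⟨KUAlgebra.ku1 _ _ _, KUAlgebra.ku1 _ _ _⟩
  ku2 p := by
    simp only [Prod.mk.injEq]
    exact ⟨KUAlgebra.ku2 _, KUAlgebra.ku2 _⟩
  ku3 p := Prod.ext (KUAlgebra.ku3 _) (KUAlgebra.ku3 _)
  ku4 p q h1 h2 := by
    rw [Prod.ext_iff] at h1 h2
    exact Prod.ext (KUAlgebra.ku4 _ _ h1.1 h2.1) (KUAlgebra.ku4 _ _ h1.2 h2.2)

/-!
A derivation fixes `𝟎`, so `d 𝟎` may be replaced by `𝟎`. If both alternatives failed, there would be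
`x`, `y` with `μ (d x) > μ 𝟎` and `β (d y) > β 𝟎`, so `μ × β` would be strictly larger at
`(d x, d y)` than at `(𝟎, 𝟎)`, where it attains its maximum.
-/

/-- Reflexivity of the KU-order. -/
theorem KUAlgebra.star_self {X : Type*} [KUAlgebra X] (x : X) : x ⋆ x = 𝟎 := by
  simpa only [KUAlgebra.ku3] using KUAlgebra.ku1 𝟎 𝟎 x

/-- An (ℓ,r)-derivation is regular, i.e. fixes `𝟎`: applying the derivation law to
`𝟎 ⋆ 𝟎 = 𝟎` gives `d 𝟎 = 𝟎 ∧ d 𝟎 = d 𝟎 ⋆ d 𝟎`. -/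
theorem IsLRDeriv.map_zero {X : Type*} [KUAlgebra X] {d : X → X} (hd : IsLRDeriv d) :
    d 𝟎 = 𝟎 := by
  have h := hd 𝟎 𝟎
  simpa only [KUwedge, KUAlgebra.ku2, KUAlgebra.ku3, KUAlgebra.star_self] using h

/-- If the Cartesian product `(μ × β)(x,y) = min (μ x) (β y)` of two fuzzy sets is a
fuzzy left derivations KU-ideal of `X × X` with respect to `D(x,y) = (d x, d y)`, where
`d` is a derivation, then either `μ (d x) ≤ μ (d 𝟎)` for all `x`, or
`β (d x) ≤ β (d 𝟎)` for all `x`. -/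
theorem product_ideal_component_le {X : Type*} [KUAlgebra X]
    (d : X → X) (hd : IsDeriv d) (μ β : X → ℝ)
    (hμ : ∀ x : X, μ x ∈ Set.Icc (0 : ℝ) 1) (hβ : ∀ x : X, β x ∈ Set.Icc (0 : ℝ) 1)
    (h : IsFuzzyLeftDerivKUIdeal (X := X × X) (fun p => (d p.1, d p.2))
      (fun p => min (μ p.1) (β p.2))) :
    (∀ x : X, μ (d x) ≤ μ (d 𝟎)) ∨ (∀ x : X, β (d x) ≤ β (d 𝟎)) := by
  have h0 : d 𝟎 = 𝟎 := hd.1.map_zero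
  rw [h0]
  by_contra! hc
  obtain ⟨⟨x, hx⟩, ⟨y, hy⟩⟩ := hc
  have hle : min (μ (d x)) (β (d y)) ≤ min (μ 𝟎) (β 𝟎) := h.2.1 (d x, d y)
  exact absurd hle (not_le.mpr (min_lt_min hx hy))
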